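/- Let N be a perfect normal subgroup of a finite group G and let θ ∈ Irr(N) be non-trivial, extending to χ ∈ Irr(G). If θ(1) is minimal among the degrees of non-trivial irreducible characters of N, then χ is a primitive character of G. -/

import Mathlib

open CategoryTheory BigOperators
open scoped Classical

noncomputable section

/-- `χ` is an irreducible complex character of the finite group `G`. -/
def IsIrrChar {G : Type} [Group G] [Fintype G] (χ : G → ℂ) : Prop :=
  ∃ V : FDRep ℂ G, Simple V ∧ χ = V.character

/-- The class function on `G` induced from the function `η` on the subgroup `H`. -/
def indChar {G : Type} [Group G] [Fintype G] (H : Subgroup G) (η : H → ℂ) : G → ℂ :=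
  fun g => (Fintype.card H : ℂ)⁻¹ *
    ∑ x : G, if h : x⁻¹ * g * x ∈ H then η ⟨x⁻¹ * g * x, h⟩ else 0

/-- `χ` is monomial: induced from a linear character of some subgroup. -/
def IsMonomial {G : Type} [Group G] [Fintype G] (χ : G → ℂ) : Prop :=
  ∃ (H : Subgroup G) (η : H →* ℂ), χ = indChar H fun h => η h

/-- `χ` is primitive: not induced from an (irreducible) character of a proper subgroup. -/
def IsPrimitive {G : Type} [Group G] [Fintype G] (χ : G → ℂ) : Prop :=
  ¬ ∃ (H : Subgroup G), H ≠ ⊤ ∧ ∃ η : H → ℂ, IsIrrChar η ∧ χ = indChar H η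

/-- The usual hermitian inner product of class functions. -/
def charInner {H : Type} [Group H] [Fintype H] (α β : H → ℂ) : ℂ :=
  (Fintype.card H : ℂ)⁻¹ * ∑ h, α h * (starRingEnd ℂ) (β h)

/-!
Suppose `χ` is induced from a character `η` of a proper subgroup `H`, so `θ(1) = [G : H] η(1)`.

If `N ≤ H`, then `θ` is a multiple of a sum of restrictions to `N` of conjugates of `η`, hence a
constituent of one of them, and `θ(1) ≤ η(1)`, which is absurd.

If `N ≰ H`, then `N` acts nontrivially on `G ⧸ H`. The fixed vectors of the permutation
representation are neither zero nor everything, so an irreducible subrepresentation inside a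
complement of them affords a nontrivial irreducible character of `N` of degree less than
`[G : H] ≤ θ(1)`, contradicting the minimality of `θ(1)`.
-/

open Module Representation

section Subrepresentations

variable {k G V : Type*} [Field k] [AddCommGroup V] [Module k V]

lemma isIrreducible_toRepresentation_of_isAtom [Monoid G] {ρ : Representation k G V}
    {T : Subrepresentation ρ} (hT : IsAtom T) : T.toRepresentation.IsIrreducible := by
  have eq_bot_or_eq_top (S : Subrepresentation T.toRepresentation) : S = ⊥ ∨ S = ⊤ := by
    let S' : Subrepresentation ρ :=
      { toSubmodule := S.toSubmodule.map T.toSubmodule.subtype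
        apply_mem_toSubmodule := by
          rintro g _ ⟨v, hv, rfl⟩
          exact ⟨T.toRepresentation g v, S.apply_mem_toSubmodule g hv, rfl⟩ }
    have hS' : S' ≤ T := Submodule.map_subtype_le T.toSubmodule S.toSubmodule
    refine (hT.le_iff.mp hS').imp (fun h ↦ ?_) (fun h ↦ ?_) <;>
      apply Subrepresentation.toSubmodule_injective
    · exact Submodule.map_injective_of_injective T.toSubmodule.injective_subtype
        ((congrArg Subrepresentation.toSubmodule h).trans (Submodule.map_bot _).symm)
    · exact Submodule.map_injective_of_injective T.toSubmodule.injective_subtype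
        ((congrArg Subrepresentation.toSubmodule h).trans (Submodule.map_subtype_top _).symm)
  have bot_ne_top : (⊥ : Subrepresentation T.toRepresentation) ≠ ⊤ := fun h ↦
    hT.1 <| Subrepresentation.toSubmodule_injective <| Submodule.subsingleton_iff_eq_bot.mp <|
      (Submodule.subsingleton_iff k).mp <|
        subsingleton_of_bot_eq_top (congrArg Subrepresentation.toSubmodule h)
  exact { exists_pair_ne := ⟨⊥, ⊤, bot_ne_top⟩, eq_bot_or_eq_top := eq_bot_or_eq_top }

lemma exists_isIrreducible_disjoint [Monoid G] {ρ : Representation k G V}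
    [ρ.IsSemisimpleRepresentation] {S : Subrepresentation ρ} (hS : S ≠ ⊤) :
    ∃ T : Subrepresentation ρ, T.toRepresentation.IsIrreducible ∧ Disjoint T S := by
  obtain ⟨C, hC⟩ := exists_isCompl S
  have := (isSemisimpleRepresentation_iff_isSemisimpleModule_asModule ρ).mp inferInstance
  have : IsAtomic (Subrepresentation ρ) :=
    Subrepresentation.subrepresentationSubmoduleOrderIso.isAtomic_iff.mpr inferInstance
  have hC_ne_bot : C ≠ ⊥ := by
    rintro rfl
    exact hS (eq_top_of_isCompl_bot hC)
  obtain ⟨T, hT, hTC⟩ := (eq_bot_or_exists_atom_le C).resolve_left hC_ne_bot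
  exact ⟨T, isIrreducible_toRepresentation_of_isAtom hT, hC.disjoint.symm.mono_left hTC⟩

variable [Group G] [Finite G] [NeZero (Nat.card G : k)] [FiniteDimensional k V]

lemma exists_isIrreducible_invariants_eq_bot_finrank_lt (ρ : Representation k G V)
    (hbot : ρ.invariants ≠ ⊥) (htop : ρ.invariants ≠ ⊤) :
    ∃ T : Subrepresentation ρ, T.toRepresentation.IsIrreducible ∧
      T.toRepresentation.invariants = ⊥ ∧ finrank k T.toSubmodule < finrank k V := by
  let I : Subrepresentation ρ := ⟨ρ.invariants, fun g v hv ↦ (hv g).symm ▸ hv⟩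
  have hI : I ≠ ⊤ := fun h ↦ htop (congrArg Subrepresentation.toSubmodule h)
  obtain ⟨T, hT, hdisj⟩ := exists_isIrreducible_disjoint hI
  have hTI : T.toSubmodule ⊓ ρ.invariants = ⊥ :=
    congrArg Subrepresentation.toSubmodule hdisj.eq_bot
  refine ⟨T, hT, (Submodule.eq_bot_iff _).mpr fun v hv ↦ ?_, Submodule.finrank_lt fun h ↦ ?_⟩
  · have hv_mem : (v : V) ∈ T.toSubmodule ⊓ ρ.invariants :=
      ⟨v.2, fun g ↦ congrArg Subtype.val (hv g)⟩
    exact Subtype.ext ((Submodule.eq_bot_iff _).mp hTI v hv_mem)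
  · exact hbot (by rwa [h, top_inf_eq] at hTI)

lemma character_ne_one_of_invariants_eq_bot (ρ : Representation k G V)
    (h : ρ.invariants = ⊥) : ρ.character ≠ fun _ ↦ 1 := by
  intro hρ
  have := Fintype.ofFinite G
  have := invertibleOfNonzero (NeZero.ne (Nat.card G : k))
  have hfix := card_inv_mul_sum_char_eq_finrank ρ
  rw [hρ, h, finrank_bot] at hfix
  simp [← Nat.card_eq_fintype_card] at hfix

end Subrepresentations

section PermutationRepresentation

variable {k G X : Type*} [CommRing k] [Nontrivial k] [Group G] [MulAction G X]

lemma invariants_ofMulAction_ne_bot [Finite X] [Nonempty X] :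
    (ofMulAction k G X).invariants ≠ ⊥ := by
  have := Fintype.ofFinite X
  obtain ⟨a⟩ := ‹Nonempty X›
  let s : MonoidAlgebra k X := ∑ x, MonoidAlgebra.single x 1
  have hs_mem : s ∈ (ofMulAction k G X).invariants := fun g ↦ by
    simp only [s, map_sum, ofMulAction_single]
    exact Equiv.sum_comp (MulAction.toPerm g) fun x ↦ MonoidAlgebra.single x (1 : k)
  have hs_ne : s ≠ 0 := fun h ↦ by
    simpa [s, Finsupp.single_apply] using congrArg (fun f ↦ f.coeff a) h
  exact (Submodule.ne_bot_iff _).mpr ⟨s, hs_mem, hs_ne⟩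

lemma invariants_ofMulAction_ne_top {g : G} {a : X} (h : g • a ≠ a) :
    (ofMulAction k G X).invariants ≠ ⊤ := by
  intro htop
  have ha : MonoidAlgebra.single a (1 : k) ∈ (ofMulAction k G X).invariants :=
    htop ▸ Submodule.mem_top
  have hfix := ha g
  rw [ofMulAction_single] at hfix
  exact h (MonoidAlgebra.single_left_injective one_ne_zero hfix)

end PermutationRepresentation

lemma finrank_pos_of_simple {k G : Type*} [Field k] [Monoid G] (V : FDRep k G) [Simple V] :
    0 < finrank k V := by
  refine Nat.pos_of_ne_zero fun h ↦ id_nonzero V ?_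
  have : Subsingleton V := finrank_zero_iff.mp h
  ext v
  exact Subsingleton.elim (α := V) _ _

lemma finrank_le_of_sum_character_mul_ne_zero {k G : Type*} [Field k] [Group G] [Fintype G]
    [NeZero (Nat.card G : k)] (V W : FDRep k G) [Simple V]
    (h : ∑ g, W.character g * V.character g⁻¹ ≠ 0) : finrank k V ≤ finrank k W := by
  have := invertibleOfNonzero (NeZero.ne (Nat.card G : k))
  have hhom : finrank k (V ⟶ W) ≠ 0 := fun h0 ↦ by
    have hpairing := FDRep.scalar_product_char_eq_finrank_equivariant V W
    rw [h0, Nat.cast_zero] at hpairing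
    exact mul_ne_zero (inv_ne_zero (NeZero.ne _)) h hpairing
  obtain ⟨f, hf⟩ := finrank_pos_iff_exists_ne_zero.mp (Nat.pos_of_ne_zero hhom)
  have := mono_of_nonzero_from_simple hf
  have hinj := (Rep.mono_iff_injective _).mp
    (inferInstance : Mono ((forget₂ (FDRep k G) (Rep k G)).map f))
  exact LinearMap.finrank_le_finrank_of_injective
    (f := ((forget₂ (FDRep k G) (Rep k G)).map f).hom.toLinearMap) hinj

section IrreducibleCharacters

variable {G : Type} [Group G] [Fintype G]

lemma isIrrChar_character {V : Type} [AddCommGroup V] [Module ℂ V] [FiniteDimensional ℂ V]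
    (ρ : Representation ℂ G V) [ρ.IsIrreducible] : IsIrrChar ρ.character := by
  refine ⟨FDRep.of ρ, (FDRep.simple_iff_char_is_norm_one _).mpr ?_, rfl⟩
  have := invertibleOfNonzero (NeZero.ne (Nat.card G : ℂ))
  have hnorm := char_orthonormal ρ ρ
  rw [if_pos ⟨Representation.Equiv.refl ρ⟩, inv_mul_eq_one₀ (NeZero.ne _)] at hnorm
  exact hnorm.symm

lemma exists_isIrrChar_degree_lt_card {X : Type} [MulAction G X] [Finite X] {g : G} {a : X}
    (h : g • a ≠ a) :
    ∃ ψ : G → ℂ, IsIrrChar ψ ∧ ψ ≠ (fun _ ↦ 1) ∧ (ψ 1).re < Nat.card X := by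
  have := Fintype.ofFinite X
  have : Nonempty X := ⟨a⟩
  have hfinrank : finrank ℂ (MonoidAlgebra ℂ X) = Nat.card X := by
    rw [(MonoidAlgebra.coeffLinearEquiv ℂ).finrank_eq, finrank_finsupp_self,
      Nat.card_eq_fintype_card]
  have : FiniteDimensional ℂ (MonoidAlgebra ℂ X) :=
    .of_finrank_pos (hfinrank ▸ Nat.card_pos)
  obtain ⟨T, hirr, hinv, hlt⟩ := exists_isIrreducible_invariants_eq_bot_finrank_lt
    (ofMulAction ℂ G X) invariants_ofMulAction_ne_bot (invariants_ofMulAction_ne_top h)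
  refine ⟨T.toRepresentation.character, isIrrChar_character _,
    character_ne_one_of_invariants_eq_bot _ hinv, ?_⟩
  rw [char_one, Complex.natCast_re, ← hfinrank]
  exact_mod_cast hlt

end IrreducibleCharacters

section InducedCharacters

/-- For `N ≤ H` with `N` normal in `G`, the representation `n ↦ V (x⁻¹ * n * x)` of `N`: the
restriction to `N` of the conjugate by `x` of a representation `V` of `H`. -/
def conjRestrict {k G : Type*} [Field k] [Group G] {N H : Subgroup G} [N.Normal]
    (hNH : N ≤ H) (V : FDRep k H) (x : G) : FDRep k N :=
  FDRep.of (V.ρ.comp ((Subgroup.inclusion hNH).comp (MulAut.conjNormal x⁻¹).toMonoidHom))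

variable {G : Type} [Group G] [Fintype G]

lemma exists_isIrrChar_degree_lt_index {K H : Subgroup G} (h : ¬ K ≤ H) :
    ∃ ψ : K → ℂ, IsIrrChar ψ ∧ ψ ≠ (fun _ ↦ 1) ∧ (ψ 1).re < H.index := by
  obtain ⟨g, hgK, hgH⟩ := SetLike.not_le_iff_exists.mp h
  have hmoves : (⟨g, hgK⟩ : K) • ((1 : G) : G ⧸ H) ≠ (1 : G) := fun hfix ↦
    hgH (by simpa using QuotientGroup.eq.mp (show ((1 : G) : G ⧸ H) = (g * 1 : G) from hfix.symm))
  exact exists_isIrrChar_degree_lt_card hmoves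

lemma indChar_one (H : Subgroup G) (η : H → ℂ) : indChar H η 1 = H.index * η 1 := by
  have hcard : (Nat.card G : ℂ) = Nat.card H * H.index := by
    exact_mod_cast H.card_mul_index.symm
  have hH : (Nat.card H : ℂ) ≠ 0 := NeZero.ne _
  have hone : (⟨1, H.one_mem⟩ : H) = 1 := rfl
  simp only [indChar, mul_one, inv_mul_cancel, H.one_mem, dite_true, hone, Finset.sum_const,
    Finset.card_univ, nsmul_eq_mul, ← Nat.card_eq_fintype_card, hcard]
  field_simp

variable {N H : Subgroup G} [N.Normal]

lemma indChar_character_eq_sum_conjRestrict (hNH : N ≤ H) (V : FDRep ℂ H) (n : N) :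
    indChar H V.character n =
      (Fintype.card H : ℂ)⁻¹ * ∑ x, (conjRestrict hNH V x).character n := by
  rw [indChar]
  congr! 2 with x
  have hconj : x⁻¹ * n * x = MulAut.conjNormal x⁻¹ n := by simp
  rw [dif_pos (hconj ▸ hNH (Subtype.property _))]
  exact congrArg V.character (Subtype.ext hconj)

lemma finrank_le_of_indChar_eq_character (hNH : N ≤ H) (V : FDRep ℂ H) (W : FDRep ℂ N)
    [hW : Simple W] (h : ∀ n : N, indChar H V.character n = W.character n) :
    finrank ℂ W ≤ finrank ℂ V := by
  have hsum : (Fintype.card H : ℂ)⁻¹ * ∑ x : G, ∑ n : N,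
      (conjRestrict hNH V x).character n * W.character n⁻¹ = Nat.card N := by
    rw [← (FDRep.simple_iff_char_is_norm_one W).mp hW, Finset.sum_comm, Finset.mul_sum]
    refine Finset.sum_congr rfl fun n _ ↦ ?_
    rw [← Finset.sum_mul, ← mul_assoc, ← indChar_character_eq_sum_conjRestrict, h]
  obtain ⟨x, -, hx⟩ := Finset.exists_ne_zero_of_sum_ne_zero
    (right_ne_zero_of_mul (hsum ▸ NeZero.ne (Nat.card N : ℂ)))
  exact finrank_le_of_sum_character_mul_ne_zero W (conjRestrict hNH V x) hx

end InducedCharacters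

theorem extension_of_minimal_degree_primitive_general {G : Type} [Group G] [Fintype G]
    {N : Subgroup G} [N.Normal] {θ : N → ℂ} (hθ : IsIrrChar θ)
    (hmin : ∀ θ' : N → ℂ, IsIrrChar θ' → θ' ≠ (fun _ ↦ 1) → (θ 1).re ≤ (θ' 1).re)
    (V : FDRep ℂ G) (hext : ∀ n : N, V.character n = θ n) :
    IsPrimitive V.character := by
  rintro ⟨H, hH, _, ⟨E, hE, rfl⟩, hind⟩
  obtain ⟨T, hT, rfl⟩ := hθ
  have hres (n : N) : indChar H E.character n = T.character n := by rw [← hind, hext]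
  have hdeg : finrank ℂ T = H.index * finrank ℂ E := by
    have := hres 1
    rw [OneMemClass.coe_one, indChar_one, FDRep.char_one, FDRep.char_one] at this
    exact_mod_cast this.symm
  have hE_pos : 0 < finrank ℂ E := finrank_pos_of_simple E
  by_cases hNH : N ≤ H
  · have hle : finrank ℂ T ≤ finrank ℂ E := finrank_le_of_indChar_eq_character hNH E T hres
    have hindex : 1 < H.index := H.one_lt_index_of_ne_top hH
    nlinarith
  · obtain ⟨ψ, hψ, hψ_ne, hψ_lt⟩ := exists_isIrrChar_degree_lt_index hNH
    have hlt : (finrank ℂ T : ℝ) < H.index := by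
      simpa using (hmin ψ hψ hψ_ne).trans_lt hψ_lt
    have hge : H.index ≤ finrank ℂ T := hdeg ▸ Nat.le_mul_of_pos_right _ hE_pos
    exact absurd (Nat.cast_lt.mp hlt) hge.not_gt

/-- Lemma 2.8(2) of Qian–Pan: an extension to `G` of a nontrivial character of minimal
degree of a perfect normal subgroup is primitive. -/
theorem extension_of_minimal_degree_primitive (G : Type) [Group G] [Fintype G]
    (N : Subgroup G) [N.Normal] (hN1 : N ≠ ⊥) (hNperf : ⁅N, N⁆ = N)
    (θ : N → ℂ) (hθ : IsIrrChar θ) (hθnt : θ ≠ fun _ => 1)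
    (hmin : ∀ θ' : N → ℂ, IsIrrChar θ' → θ' ≠ (fun _ => 1) → (θ 1).re ≤ (θ' 1).re)
    (χ : G → ℂ) (hχ : IsIrrChar χ) (hext : ∀ n : N, χ n = θ n) :
    IsPrimitive χ := by
  obtain ⟨V, -, rfl⟩ := hχ
  exact extension_of_minimal_degree_primitive_general hθ hmin V hext
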